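/- arXiv:2207.12704 — 3 statements merged into one kernel-verified Lean document; each statement's English description precedes it below -/
import Mathlib

section
/- Let A be a set with a length function μ. Then F_ℝ(A), with the pseudometric induced by ‖·‖_{F_ℝ(A;μ)}, is a geodesic pseudometric space: for any w, w' ∈ F_ℝ(A) there is a path α : [0,1] → F_ℝ(A) with α(0)=w, α(1)=w' and d(α(t₁),α(t₂)) = |t₂−t₁|·d(w,w') for all t₁,t₂ ∈ [0,1]. -/
/-!
The heart of the matter is that the infimum defining `‖g‖` is attained. Write `g` as a word in
letters `a(r)`, and allow two kinds of moves on words: deleting a letter `a(r)` at cost `|r| μ(a)`,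
and merging neighbours `a(r) a(s)` into `a(r+s)` for free. Each move shortens the word, so a given
word has only finitely many total costs of reduction to the empty word (`Reduces`,
`Reduces.exists_least`), and each such cost is the length of an expression of `g` as a product of
conjugates of generators (`Reduces.mem_wordNormSet`).

Conversely, the least cost of reduction depends only on the group element: a diamond argument
(`Change.diamond`) shows that it does not increase when a letter `a(0)` is dropped or two neighbours
are merged, and it clearly does not increase under the reverse operations. Hence
`CostLE w x`, "`w` reduces at cost at most `x`", is invariant under equality in `F_ℝ(A)`
(`CostLE.congr`). An expression of `g` as a product of conjugates `y a(r) y⁻¹` of total length `x`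
spells a word reducing at cost at most `x`, so the least reduction cost of any word for `g`
is the least element of `wordNormSet` (`isLeast_FRnorm`).

Given a length-minimizing expression `w⁻¹ w' = ∏ yᵢ aᵢ(rᵢ) yᵢ⁻¹`, one runs through the factors one
after the other, letting the exponent of the current one grow linearly from `0` to `rᵢ`. The
resulting path is `1`-Lipschitz in the arc-length parameter (`exists_path`), and the triangle
inequality turns this into the geodesic equality, as its total length is the distance of its ends.
-/

/-- The set of total lengths of expressions of `g` as a product of conjugates
of generators `gen i ^ {±1}`, each weighted by the length function `ℓ`. -/
def wordNormSet {G : Type*} [Group G] {I : Type*}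
    (gen : I → G) (ℓ : I → ℝ) (g : G) : Set ℝ :=
  { x | ∃ l : List (G × I × Bool),
      g = (l.map fun p => p.1 * (if p.2.2 then gen p.2.1 else (gen p.2.1)⁻¹) * p.1⁻¹).prod ∧
      x = (l.map fun p => ℓ p.2.1).sum }

/-- The conjugation-invariant word norm associated to a length function. -/
noncomputable def wordNorm {G : Type*} [Group G] {I : Type*}
    (gen : I → G) (ℓ : I → ℝ) (g : G) : ℝ :=
  sInf (wordNormSet gen ℓ g)

/-- `F_ℝ(A)`: the free product of copies of `ℝ` indexed by `A`. -/
abbrev FR (A : Type*) : Type _ := Monoid.CoprodI (fun _ : A => Multiplicative ℝ)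

/-- The generator `a(r)` of `F_ℝ(A)`. -/
def genFR (A : Type*) (p : A × ℝ) : FR A :=
  Monoid.CoprodI.of (i := p.1) (Multiplicative.ofAdd p.2)

/-- The conjugation-invariant word norm `‖·‖_{F_ℝ(A;μ)}`. -/
noncomputable def FRnorm {A : Type*} (μ : A → ℝ) : FR A → ℝ :=
  wordNorm (genFR A) (fun p => |p.2| * μ p.1)

namespace FRGeodesic

open Monoid

variable {A : Type*}

/-! ### Words and moves -/

/-- The element of `F_ℝ(A)` spelled by a word in the letters `a(r)`. -/
def ev (w : List (A × ℝ)) : FR A := (w.map (genFR A)).prod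

@[simp] lemma ev_nil : ev ([] : List (A × ℝ)) = 1 := rfl

@[simp] lemma ev_cons (p : A × ℝ) (w : List (A × ℝ)) : ev (p :: w) = genFR A p * ev w := by
  simp [ev]

@[simp] lemma ev_append (u v : List (A × ℝ)) : ev (u ++ v) = ev u * ev v := by
  simp [ev]

lemma gen_zero (a : A) : genFR A (a, 0) = 1 := by
  simp [genFR]

lemma gen_add (a : A) (r s : ℝ) : genFR A (a, r + s) = genFR A (a, r) * genFR A (a, s) := by
  simp [genFR, ofAdd_add]

lemma gen_neg (a : A) (r : ℝ) : genFR A (a, -r) = (genFR A (a, r))⁻¹ := by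
  simp [genFR, ofAdd_neg]

lemma ev_surjective (g : FR A) : ∃ w, ev w = g := by
  induction g using CoprodI.induction_on with
  | one => exact ⟨[], rfl⟩
  | of a r => exact ⟨[(a, r.toAdd)], by simp [genFR]⟩
  | mul x y hx hy =>
    obtain ⟨u, rfl⟩ := hx
    obtain ⟨v, rfl⟩ := hy
    exact ⟨u ++ v, by simp⟩

/-- A single shortening move on a word, with its cost: delete a letter `a(r)` at cost `|r| μ(a)`,
or merge two neighbouring letters with the same label at no cost. -/
inductive Move (μ : A → ℝ) : List (A × ℝ) → List (A × ℝ) → ℝ → Prop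
  | del (a : A) (r : ℝ) (v : List (A × ℝ)) : Move μ ((a, r) :: v) v (|r| * μ a)
  | merge (a : A) (r s : ℝ) (v : List (A × ℝ)) :
      Move μ ((a, r) :: (a, s) :: v) ((a, r + s) :: v) 0
  | cons (p : A × ℝ) {w w' : List (A × ℝ)} {k : ℝ} (h : Move μ w w' k) :
      Move μ (p :: w) (p :: w') k

/-- `Reduces μ w c`: some sequence of moves of total cost `c` takes `w` to the empty word. -/
inductive Reduces (μ : A → ℝ) : List (A × ℝ) → ℝ → Prop
  | nil : Reduces μ [] 0
  | move {w w₁ : List (A × ℝ)} {k c : ℝ} (h : Move μ w w₁ k) (h₁ : Reduces μ w₁ c) :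
      Reduces μ w (k + c)

/-- An elementary change of a word, with its cost: drop a letter `a(0)`, merge two neighbouring
letters with the same label, or replace `a(r)` by `a(r')` at cost `|r - r'| μ(a)`. -/
inductive Change (μ : A → ℝ) : List (A × ℝ) → List (A × ℝ) → ℝ → Prop
  | zero (a : A) (v : List (A × ℝ)) : Change μ ((a, 0) :: v) v 0
  | merge (a : A) (r s : ℝ) (v : List (A × ℝ)) :
      Change μ ((a, r) :: (a, s) :: v) ((a, r + s) :: v) 0
  | perturb (a : A) (r r' : ℝ) (v : List (A × ℝ)) :
      Change μ ((a, r) :: v) ((a, r') :: v) (|r - r'| * μ a)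
  | cons (p : A × ℝ) {w w' : List (A × ℝ)} {k : ℝ} (h : Change μ w w' k) :
      Change μ (p :: w) (p :: w') k

/-- `CostLE μ w x`: the word `w` can be reduced to the empty word at cost at most `x`. -/
def CostLE (μ : A → ℝ) (w : List (A × ℝ)) (x : ℝ) : Prop := ∃ c ≤ x, Reduces μ w c

lemma Move.append {μ : A → ℝ} {w w' : List (A × ℝ)} {k : ℝ} (h : Move μ w w' k)
    (u : List (A × ℝ)) : Move μ (u ++ w) (u ++ w') k := by
  induction u with
  | nil => exact h
  | cons p u ih => exact ih.cons p

lemma Change.append {μ : A → ℝ} {w w' : List (A × ℝ)} {k : ℝ} (h : Change μ w w' k)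
    (u : List (A × ℝ)) : Change μ (u ++ w) (u ++ w') k := by
  induction u with
  | nil => exact h
  | cons p u ih => exact ih.cons p

/-- A move or nothing. -/
def Move? (μ : A → ℝ) (w w' : List (A × ℝ)) (k : ℝ) : Prop :=
  Move μ w w' k ∨ (w = w' ∧ k = 0)

/-- A change or nothing. -/
def Change? (μ : A → ℝ) (w w' : List (A × ℝ)) (k : ℝ) : Prop :=
  Change μ w w' k ∨ (w = w' ∧ k = 0)

lemma Move?.cons {μ : A → ℝ} {w w' : List (A × ℝ)} {k : ℝ} (h : Move? μ w w' k) (p : A × ℝ) :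
    Move? μ (p :: w) (p :: w') k := by
  rcases h with h | ⟨rfl, rfl⟩
  · exact .inl (h.cons p)
  · exact .inr ⟨rfl, rfl⟩

lemma Change?.cons {μ : A → ℝ} {w w' : List (A × ℝ)} {k : ℝ} (h : Change? μ w w' k) (p : A × ℝ) :
    Change? μ (p :: w) (p :: w') k := by
  rcases h with h | ⟨rfl, rfl⟩
  · exact .inl (h.cons p)
  · exact .inr ⟨rfl, rfl⟩

/-- The diamond property: a change and a move starting from the same word can be completed by
at most one move and at most one change to a common word, without raising the total cost. -/
lemma Change.diamond {μ : A → ℝ} (hμ : ∀ a, 0 ≤ μ a) {w w' w₁ : List (A × ℝ)} {k c : ℝ}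
    (h : Change μ w w' k) (hm : Move μ w w₁ c) :
    ∃ w₂ k' c', Move? μ w' w₂ c' ∧ Change? μ w₁ w₂ k' ∧ c' + k' ≤ c + k := by
  induction h generalizing w₁ c with
  | zero a v =>
    cases hm with
    | del => exact ⟨v, 0, 0, .inr ⟨rfl, rfl⟩, .inr ⟨rfl, rfl⟩, by simp⟩
    | merge _ _ s v =>
      exact ⟨(a, s) :: v, 0, 0, .inr ⟨rfl, rfl⟩, .inr ⟨by simp, rfl⟩, by simp⟩
    | cons _ h => exact ⟨_, 0, c, .inl h, .inl (.zero a _), by simp⟩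
  | merge a r s v =>
    cases hm with
    | del =>
      refine ⟨_, _, 0, .inr ⟨rfl, rfl⟩, .inl (.perturb a s (r + s) v), ?_⟩
      rw [show s - (r + s) = -r by ring, abs_neg]; simp
    | merge => exact ⟨_, 0, 0, .inr ⟨rfl, rfl⟩, .inr ⟨rfl, rfl⟩, by simp⟩
    | cons _ h =>
      cases h with
      | del =>
        refine ⟨_, _, 0, .inr ⟨rfl, rfl⟩, .inl (.perturb a r (r + s) v), ?_⟩
        rw [show r - (r + s) = -s by ring, abs_neg]; simp
      | merge _ _ t v =>
        refine ⟨_, 0, 0, .inl (.merge a (r + s) t v), .inl ?_, by simp⟩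
        rw [add_assoc]
        exact .merge a r (s + t) v
      | cons _ h => exact ⟨_, 0, c, .inl (h.cons _), .inl (.merge a r s _), by simp⟩
  | perturb a r r' v =>
    cases hm with
    | del =>
      refine ⟨_, 0, _, .inl (.del a r' v), .inr ⟨rfl, rfl⟩, ?_⟩
      have h1 : |r'| ≤ |r| + |r - r'| := by
        have := abs_sub r (r - r')
        simpa using this
      nlinarith [hμ a]
    | merge _ _ s v =>
      refine ⟨_, _, 0, .inl (.merge a r' s v), .inl (.perturb a (r + s) (r' + s) v), ?_⟩
      simp
    | cons _ h =>
      exact ⟨_, _, c, .inl (h.cons _), .inl (.perturb a r r' _), le_rfl⟩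
  | @cons p w w' k h ih =>
    cases hm with
    | del a r => exact ⟨w', k, _, .inl (.del a r w'), .inl h, le_rfl⟩
    | merge a r s v =>
      cases h with
      | zero => exact ⟨_, 0, 0, .inr ⟨rfl, rfl⟩, .inr ⟨by simp, rfl⟩, by simp⟩
      | merge _ _ t v =>
        refine ⟨_, 0, 0, .inl (.merge a r (s + t) v), .inl ?_, by simp⟩
        rw [← add_assoc]
        exact .merge a (r + s) t v
      | perturb _ _ s' =>
        refine ⟨_, _, 0, .inl (.merge a r s' v), .inl (.perturb a (r + s) (r + s') v), ?_⟩
        simp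
      | cons _ h => exact ⟨_, k, 0, .inl (.merge a r s _), .inl (h.cons _), le_rfl⟩
    | cons _ hm =>
      obtain ⟨w₂, k', c', h1, h2, h3⟩ := ih hm
      exact ⟨p :: w₂, k', c', h1.cons p, h2.cons p, h3⟩

lemma Reduces.change {μ : A → ℝ} (hμ : ∀ a, 0 ≤ μ a) {w w' : List (A × ℝ)} {c k : ℝ}
    (h : Reduces μ w c) (hc : Change μ w w' k) : CostLE μ w' (c + k) := by
  induction h generalizing w' k with
  | nil => cases hc
  | @move w w₁ m c hm h₁ ih =>
    obtain ⟨w₂, k', m', h1, h2, h3⟩ := hc.diamond hμ hm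
    obtain ⟨d, hd, hr⟩ : CostLE μ w₂ (c + k') := by
      rcases h2 with h2 | ⟨rfl, rfl⟩
      · exact ih h2
      · exact ⟨c, by simp, h₁⟩
    rcases h1 with h1 | ⟨rfl, rfl⟩
    · exact ⟨m' + d, by linarith, .move h1 hr⟩
    · exact ⟨d, by linarith, hr⟩

lemma CostLE.change {μ : A → ℝ} (hμ : ∀ a, 0 ≤ μ a) {w w' : List (A × ℝ)} {x : ℝ}
    (h : CostLE μ w x) (hc : Change μ w w' 0) : CostLE μ w' x := by
  obtain ⟨c, hcx, hr⟩ := h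
  obtain ⟨d, hd, hr'⟩ := hr.change hμ hc
  exact ⟨d, by linarith, hr'⟩

lemma CostLE.move {μ : A → ℝ} {w w' : List (A × ℝ)} {x k : ℝ}
    (h : CostLE μ w' x) (hm : Move μ w w' k) : CostLE μ w (k + x) := by
  obtain ⟨c, hcx, hr⟩ := h
  exact ⟨k + c, by linarith, .move hm hr⟩

/-! ### Invariance of the reduction cost under equality in the group -/

/-- Two words are congruent if they may be exchanged inside any word without affecting its
reduction costs. -/
def costCon (μ : A → ℝ) : Con (FreeMonoid (A × ℝ)) where
  r w w' := ∀ (u v : List (A × ℝ)) (x : ℝ),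
    CostLE μ (u ++ w.toList ++ v) x ↔ CostLE μ (u ++ w'.toList ++ v) x
  iseqv := ⟨fun _ _ _ _ => Iff.rfl, fun h u v x => (h u v x).symm,
    fun h h' u v x => (h u v x).trans (h' u v x)⟩
  mul' := by
    intro w x y z h h' u v t
    have h1 := h u (y.toList ++ v) t
    have h2 := h' (u ++ x.toList) v t
    simp only [FreeMonoid.toList_mul, List.append_assoc] at h1 h2 ⊢
    exact h1.trans h2

/-- The homomorphism from `F_ℝ(A)` to words modulo `costCon`, sending `a(r)` to its letter. -/
def toCost (μ : A → ℝ) (hμ : ∀ a, 0 ≤ μ a) : FR A →* (costCon μ).Quotient :=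
  CoprodI.lift fun a =>
    { toFun := fun r => ((FreeMonoid.of (a, r.toAdd) : FreeMonoid (A × ℝ)) : (costCon μ).Quotient)
      map_one' := by
        refine (Con.eq _).2 fun u v x => ?_
        simp only [FreeMonoid.toList_of, FreeMonoid.toList_one, toAdd_one, List.append_assoc,
          List.cons_append, List.nil_append]
        refine ⟨fun h => h.change hμ ((Change.zero a v).append u), fun h => ?_⟩
        simpa using h.move ((Move.del a 0 v).append u)
      map_mul' := by
        intro r s
        refine (Con.eq _).2 fun u v x => ?_
        simp only [FreeMonoid.toList_of, FreeMonoid.toList_mul, toAdd_mul, List.append_assoc,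
          List.cons_append, List.nil_append]
        refine ⟨fun h => ?_, fun h => h.change hμ ((Change.merge a _ _ v).append u)⟩
        simpa using h.move ((Move.merge a _ _ v).append u) }

lemma toCost_ev (μ : A → ℝ) (hμ : ∀ a, 0 ≤ μ a) (w : List (A × ℝ)) :
    toCost μ hμ (ev w) = ((FreeMonoid.ofList w : FreeMonoid (A × ℝ)) : (costCon μ).Quotient) := by
  induction w with
  | nil => simp only [ev_nil, map_one]; rfl
  | cons p w ih =>
    rw [ev_cons, map_mul, ih, FreeMonoid.ofList_cons, Con.coe_mul]
    congr 1

lemma CostLE.congr {μ : A → ℝ} (hμ : ∀ a, 0 ≤ μ a) {w w' : List (A × ℝ)} {x : ℝ}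
    (h : CostLE μ w x) (he : ev w = ev w') : CostLE μ w' x := by
  have h1 := congrArg (toCost μ hμ) he
  rw [toCost_ev, toCost_ev] at h1
  have h2 := (Con.eq _).1 h1 [] [] x
  simp only [FreeMonoid.toList_ofList, List.nil_append, List.append_nil] at h2
  exact h2.1 h

/-! ### The norm is attained -/

lemma finite_moves (μ : A → ℝ) (w : List (A × ℝ)) :
    {q : List (A × ℝ) × ℝ | Move μ w q.1 q.2}.Finite := by
  induction w with
  | nil =>
    convert Set.finite_empty
    ext q
    simp only [Set.mem_ofPred_eq, Set.mem_empty_iff_false, iff_false]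
    intro h
    cases h
  | cons p w ih =>
    -- Besides the moves inside `w`, the first letter allows one deletion and at most one merge.
    refine (((ih.image fun q => (p :: q.1, q.2)).insert (w, |p.2| * μ p.1)).insert
      ((p.1, p.2 + (w.headD p).2) :: w.tail, 0)).subset ?_
    rintro ⟨w', k⟩ h
    simp only [Set.mem_ofPred_eq] at h
    cases h with
    | del => simp
    | merge => simp
    | cons _ h => exact .inr (.inr ⟨(_, k), h, rfl⟩)

lemma Move.length {μ : A → ℝ} {w w' : List (A × ℝ)} {k : ℝ} (h : Move μ w w' k) :
    w.length = w'.length + 1 := by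
  induction h with
  | del => simp
  | merge => simp
  | cons p h ih => simp [ih]

lemma finite_reduces (μ : A → ℝ) (n : ℕ) (w : List (A × ℝ)) (hn : w.length = n) :
    {c | Reduces μ w c}.Finite := by
  induction n generalizing w with
  | zero =>
    obtain rfl := List.length_eq_zero_iff.1 hn
    refine (Set.finite_singleton (0 : ℝ)).subset ?_
    rintro c (_ | ⟨⟨⟩, _⟩)
    rfl
  | succ n ih =>
    refine ((finite_moves μ w).biUnion (t := fun q => (fun c => q.2 + c) '' {c | Reduces μ q.1 c})
      fun q hq => (ih q.1 ?_).image _).subset ?_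
    · have := Move.length hq
      omega
    · rintro c hc
      cases hc with
      | nil => simp at hn
      | @move _ w₁ k c hm h =>
        exact Set.mem_biUnion (show (w₁, k) ∈ {q : List (A × ℝ) × ℝ | Move μ w q.1 q.2} from hm)
          ⟨c, h, rfl⟩

lemma exists_reduces (μ : A → ℝ) (w : List (A × ℝ)) : ∃ c, Reduces μ w c := by
  induction w with
  | nil => exact ⟨0, .nil⟩
  | cons p w ih =>
    obtain ⟨c, hc⟩ := ih
    exact ⟨_, .move (.del p.1 p.2 w) hc⟩

lemma Reduces.exists_least (μ : A → ℝ) (w : List (A × ℝ)) :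
    ∃ m, Reduces μ w m ∧ ∀ c, Reduces μ w c → m ≤ c := by
  obtain ⟨m, hm, h⟩ := Set.exists_min_image _ id (finite_reduces μ _ w rfl) (exists_reduces μ w)
  exact ⟨m, hm, h⟩

/-- The set of lengths whose infimum is `FRnorm μ g`. -/
abbrev lengths (μ : A → ℝ) (g : FR A) : Set ℝ :=
  wordNormSet (genFR A) (fun p => |p.2| * μ p.1) g

lemma zero_mem_lengths (μ : A → ℝ) : (0 : ℝ) ∈ lengths μ 1 := ⟨[], by simp, by simp⟩

lemma add_mem_lengths {μ : A → ℝ} {g h : FR A} {x y : ℝ} (hx : x ∈ lengths μ g)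
    (hy : y ∈ lengths μ h) : x + y ∈ lengths μ (g * h) := by
  obtain ⟨l, rfl, rfl⟩ := hx
  obtain ⟨l', rfl, rfl⟩ := hy
  exact ⟨l ++ l', by simp, by simp⟩

lemma conj_mem_lengths (μ : A → ℝ) (y : FR A) (a : A) (r : ℝ) :
    |r| * μ a ∈ lengths μ (y * genFR A (a, r) * y⁻¹) :=
  ⟨[(y, (a, r), true)], by simp, by simp⟩

/-- Induction over expressions as products of conjugates; inverse generators `a(r)⁻¹` need not be
treated separately, being equal to `a(-r)`. -/
lemma lengths_induction {μ : A → ℝ} {P : FR A → ℝ → Prop} (one : P 1 0)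
    (mul : ∀ y a r g x, x ∈ lengths μ g → P g x →
      P (y * genFR A (a, r) * y⁻¹ * g) (|r| * μ a + x))
    {g : FR A} {x : ℝ} (h : x ∈ lengths μ g) : P g x := by
  obtain ⟨l, rfl, rfl⟩ := h
  induction l with
  | nil => exact one
  | cons p l ih =>
    obtain ⟨y, ⟨a, r⟩, b⟩ := p
    simp only [List.map_cons, List.prod_cons, List.sum_cons]
    cases b with
    | true => exact mul y a r _ _ ⟨l, rfl, rfl⟩ ih
    | false =>
      have := mul y a (-r) _ _ ⟨l, rfl, rfl⟩ ih
      rw [gen_neg, abs_neg] at this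
      exact this

lemma inv_mem_lengths {μ : A → ℝ} {g : FR A} {x : ℝ} (h : x ∈ lengths μ g) :
    x ∈ lengths μ g⁻¹ := by
  refine lengths_induction (P := fun g x => x ∈ lengths μ g⁻¹) ?_ ?_ h
  · simpa using zero_mem_lengths μ
  · intro y a r g x _ ih
    have := add_mem_lengths ih (conj_mem_lengths μ y a (-r))
    rw [gen_neg, abs_neg, add_comm] at this
    simpa [mul_assoc] using this

lemma mem_lengths_conj {μ : A → ℝ} {g : FR A} {x : ℝ} (h : x ∈ lengths μ g) (z : FR A) :
    x ∈ lengths μ (z * g * z⁻¹) := by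
  refine lengths_induction (P := fun g x => x ∈ lengths μ (z * g * z⁻¹)) ?_ ?_ h
  · simpa using zero_mem_lengths μ
  · intro y a r g x _ ih
    simpa [mul_assoc] using add_mem_lengths (conj_mem_lengths μ (z * y) a r) ih

lemma nonneg_of_mem_lengths {μ : A → ℝ} (hμ : ∀ a, 0 ≤ μ a) {g : FR A} {x : ℝ}
    (h : x ∈ lengths μ g) : 0 ≤ x := by
  refine lengths_induction (P := fun _ x => 0 ≤ x) le_rfl ?_ h
  intro y a r g x _ ih
  have := mul_nonneg (abs_nonneg r) (hμ a)
  linarith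

lemma Move.ev {μ : A → ℝ} {w w' : List (A × ℝ)} {k : ℝ} (h : Move μ w w' k) :
    ∃ g, FRGeodesic.ev w = g * FRGeodesic.ev w' ∧ k ∈ lengths μ g := by
  induction h with
  | del a r v => exact ⟨genFR A (a, r), by simp, by simpa using conj_mem_lengths μ 1 a r⟩
  | merge a r s v => exact ⟨1, by simp [gen_add, mul_assoc], zero_mem_lengths μ⟩
  | @cons p w w' k h ih =>
    obtain ⟨g, hg, hk⟩ := ih
    exact ⟨genFR A p * g * (genFR A p)⁻¹, by simp [hg, mul_assoc], mem_lengths_conj hk _⟩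

lemma Reduces.mem_wordNormSet {μ : A → ℝ} {w : List (A × ℝ)} {c : ℝ} (h : Reduces μ w c) :
    c ∈ lengths μ (ev w) := by
  induction h with
  | nil => exact zero_mem_lengths μ
  | move hm _ ih =>
    obtain ⟨g, hg, hk⟩ := hm.ev
    rw [hg]
    exact add_mem_lengths hk ih

lemma exists_costLE {μ : A → ℝ} (hμ : ∀ a, 0 ≤ μ a) {g : FR A} {x : ℝ}
    (h : x ∈ lengths μ g) : ∃ w, ev w = g ∧ CostLE μ w x := by
  refine lengths_induction (P := fun g x => ∃ w, ev w = g ∧ CostLE μ w x)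
    ⟨[], rfl, 0, le_rfl, .nil⟩ ?_ h
  rintro y a r g x - ⟨w, rfl, hw⟩
  obtain ⟨u, rfl⟩ := ev_surjective y
  obtain ⟨u', hu'⟩ := ev_surjective (ev u)⁻¹
  refine ⟨u ++ (a, r) :: (u' ++ w), by simp [hu', mul_assoc], ?_⟩
  -- Deleting the letter `a(r)` leaves a word for `g`, whose cost is that of `w`.
  have h1 : CostLE μ (u ++ (u' ++ w)) x := hw.congr hμ (by simp [hu'])
  exact h1.move ((Move.del a r _).append u)

lemma isLeast_FRnorm {μ : A → ℝ} (hμ : ∀ a, 0 ≤ μ a) (g : FR A) :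
    IsLeast (lengths μ g) (FRnorm μ g) := by
  obtain ⟨w, rfl⟩ := ev_surjective g
  obtain ⟨m, hm, hmin⟩ := Reduces.exists_least μ w
  have h : IsLeast (lengths μ (ev w)) m := by
    refine ⟨hm.mem_wordNormSet, fun x hx => ?_⟩
    obtain ⟨w', he, hw'⟩ := exists_costLE hμ hx
    obtain ⟨c, hc, hr⟩ := hw'.congr hμ he
    exact (hmin c hr).trans hc
  have h' : FRnorm μ (ev w) = m := h.csInf_eq
  rwa [h']

/-! ### Geodesics -/

lemma norm_mul_le {μ : A → ℝ} (hμ : ∀ a, 0 ≤ μ a) (g h : FR A) :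
    FRnorm μ (g * h) ≤ FRnorm μ g + FRnorm μ h :=
  (isLeast_FRnorm hμ _).2 (add_mem_lengths (isLeast_FRnorm hμ g).1 (isLeast_FRnorm hμ h).1)

lemma norm_inv {μ : A → ℝ} (hμ : ∀ a, 0 ≤ μ a) (g : FR A) : FRnorm μ g⁻¹ = FRnorm μ g := by
  refine le_antisymm ((isLeast_FRnorm hμ _).2 (inv_mem_lengths (isLeast_FRnorm hμ g).1)) ?_
  refine (isLeast_FRnorm hμ _).2 ?_
  simpa using inv_mem_lengths (isLeast_FRnorm hμ g⁻¹).1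

lemma norm_one {μ : A → ℝ} (hμ : ∀ a, 0 ≤ μ a) : FRnorm μ (1 : FR A) = 0 :=
  le_antisymm ((isLeast_FRnorm hμ _).2 (zero_mem_lengths μ))
    (nonneg_of_mem_lengths hμ (isLeast_FRnorm hμ _).1)

lemma norm_conj_le {μ : A → ℝ} (hμ : ∀ a, 0 ≤ μ a) (y : FR A) (a : A) (r : ℝ) :
    FRnorm μ (y * genFR A (a, r) * y⁻¹) ≤ |r| * μ a :=
  (isLeast_FRnorm hμ _).2 (conj_mem_lengths μ y a r)

/-- An expression of `g` of length `c` gives a `1`-Lipschitz path on `[0, c]` starting at `1`.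
It ends at distance `0` from `g`, but possibly not in `g` itself: factors of length `0` need not
be trivial, and no time is available to traverse them. -/
lemma exists_path {μ : A → ℝ} (hμ : ∀ a, 0 ≤ μ a) {g : FR A} {c : ℝ}
    (h : c ∈ lengths μ g) :
    ∃ β : ℝ → FR A, β 0 = 1 ∧
      (∀ t, 0 ≤ t → t ≤ c → FRnorm μ ((β t)⁻¹ * g) ≤ c - t) ∧
      ∀ s t, 0 ≤ s → s ≤ t → t ≤ c → FRnorm μ ((β s)⁻¹ * β t) ≤ t - s := by
  refine lengths_induction (P := fun g c => ∃ β : ℝ → FR A, β 0 = 1 ∧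
      (∀ t, 0 ≤ t → t ≤ c → FRnorm μ ((β t)⁻¹ * g) ≤ c - t) ∧
      ∀ s t, 0 ≤ s → s ≤ t → t ≤ c → FRnorm μ ((β s)⁻¹ * β t) ≤ t - s) ?_ ?_ h
  · refine ⟨fun _ => 1, rfl, fun t h0 h1 => ?_, fun s t h0 h1 h2 => ?_⟩
    · simpa [norm_one hμ] using h1
    · simpa [norm_one hμ] using h1
  · rintro y a r g c hc ⟨β, hβ0, hβg, hβ⟩
    obtain ⟨k, hk⟩ : ∃ k, k = |r| * μ a := ⟨_, rfl⟩
    have hk0 : 0 ≤ k := hk ▸ mul_nonneg (abs_nonneg r) (hμ a)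
    have hg : FRnorm μ g ≤ c := (isLeast_FRnorm hμ _).2 hc
    -- For `k = 0` the quotient `r / k` is `0`, and the path jumps by `y a(r) y⁻¹` just after time `0`.
    let γ : ℝ → FR A := fun t => y * genFR A (a, t * (r / k)) * y⁻¹
    have hdiff : ∀ s t, (γ s)⁻¹ * γ t = y * genFR A (a, (t - s) * (r / k)) * y⁻¹ := by
      intro s t
      have : genFR A (a, (t - s) * (r / k)) =
          (genFR A (a, s * (r / k)))⁻¹ * genFR A (a, t * (r / k)) := by
        rw [← gen_neg, ← gen_add]; congr 2; ring
      simp only [γ, this]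
      group
    have hγ : ∀ s t, s ≤ t → FRnorm μ ((γ s)⁻¹ * γ t) ≤ t - s := by
      intro s t hst
      rw [hdiff]
      refine (norm_conj_le hμ _ _ _).trans ?_
      rw [abs_mul, abs_div, abs_of_nonneg (sub_nonneg.2 hst), abs_of_nonneg hk0]
      have : |r| / k * μ a ≤ 1 := by
        rw [div_mul_eq_mul_div, ← hk]; exact div_self_le_one k
      nlinarith
    have hend : ∀ s, s ≤ k → 0 ≤ s →
        FRnorm μ ((γ s)⁻¹ * (y * genFR A (a, r) * y⁻¹)) ≤ k - s := by
      intro s hs hs0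
      rcases hk0.eq_or_lt with h0 | hpos
      · have h1 : γ s = 1 := by simp [γ, ← h0, gen_zero]
        have := norm_conj_le hμ y a r
        rw [h1, inv_one, one_mul]
        linarith
      · have h1 : y * genFR A (a, r) * y⁻¹ = γ k := by
          simp only [γ]; rw [mul_div_cancel₀ _ hpos.ne']
        rw [h1]
        exact hγ s k hs
    rw [← hk]
    refine ⟨fun t => if t ≤ k then γ t else y * genFR A (a, r) * y⁻¹ * β (t - k), ?_, ?_, ?_⟩
    · simp [hk0, γ, gen_zero]
    · intro t ht htc
      dsimp only
      split_ifs with h1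
      · have := norm_mul_le hμ ((γ t)⁻¹ * (y * genFR A (a, r) * y⁻¹)) g
        rw [mul_assoc] at this
        linarith [hend t h1 ht]
      · have := hβg (t - k) (by linarith) (by linarith)
        have h2 : (y * genFR A (a, r) * y⁻¹ * β (t - k))⁻¹ * (y * genFR A (a, r) * y⁻¹ * g) =
            (β (t - k))⁻¹ * g := by group
        rw [h2]
        linarith
    · intro s t hs hst htc
      dsimp only
      split_ifs with h1 h2 h2
      · exact hγ s t hst
      · have h3 := norm_mul_le hμ ((γ s)⁻¹ * (y * genFR A (a, r) * y⁻¹)) (β (t - k))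
        rw [mul_assoc] at h3
        have h4 := hβ 0 (t - k) le_rfl (by linarith) (by linarith)
        rw [hβ0, inv_one, one_mul] at h4
        linarith [hend s h1 hs]
      · linarith
      · have := hβ (s - k) (t - k) (by linarith) (by linarith) (by linarith)
        have h2 : (y * genFR A (a, r) * y⁻¹ * β (s - k))⁻¹ *
            (y * genFR A (a, r) * y⁻¹ * β (t - k)) = (β (s - k))⁻¹ * β (t - k) := by group
        rw [h2]
        linarith

end FRGeodesic

open FRGeodesic in
/-- `F_ℝ(A)` with the pseudometric `d(w,w') = ‖w⁻¹w'‖_{F_ℝ(A;μ)}`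
is a geodesic pseudometric space. -/
theorem FR_geodesic
    {A : Type*} (μ : A → ℝ) (hμ : ∀ a, 0 ≤ μ a) :
    ∀ w w' : FR A, ∃ α : ℝ → FR A,
      α 0 = w ∧ α 1 = w' ∧
      ∀ t₁ ∈ Set.Icc (0:ℝ) 1, ∀ t₂ ∈ Set.Icc (0:ℝ) 1,
        FRnorm μ ((α t₁)⁻¹ * α t₂) = |t₂ - t₁| * FRnorm μ (w⁻¹ * w') := by
  intro w w'
  obtain ⟨L, hL⟩ : ∃ L, L = FRnorm μ (w⁻¹ * w') := ⟨_, rfl⟩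
  have hmem : L ∈ lengths μ (w⁻¹ * w') := hL ▸ (isLeast_FRnorm hμ (w⁻¹ * w')).1
  have hL0 : 0 ≤ L := nonneg_of_mem_lengths hμ hmem
  obtain ⟨β, hβ0, hβg, hβ⟩ := exists_path hμ hmem
  -- The value at `1` is prescribed, as `β L` is only known to have distance `0` from `w⁻¹ w'`.
  obtain ⟨α, hα⟩ : ∃ α : ℝ → FR A, α = fun t => if t = 1 then w' else w * β (t * L) := ⟨_, rfl⟩
  have hα0 : α 0 = w := by simp [hα, hβ0]
  have hα1 : α 1 = w' := by simp [hα]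
  have upper : ∀ s t, 0 ≤ s → s ≤ t → t ≤ 1 → FRnorm μ ((α s)⁻¹ * α t) ≤ (t - s) * L := by
    intro s t hs hst ht
    by_cases h1 : s = 1
    · obtain rfl : t = s := by linarith
      simp [norm_one hμ]
    have hsα : α s = w * β (s * L) := by simp [hα, h1]
    by_cases h2 : t = 1
    · subst h2
      have := hβg (s * L) (by positivity) (by nlinarith)
      rw [hsα, hα1, mul_inv_rev, mul_assoc]
      linarith
    · have htα : α t = w * β (t * L) := by simp [hα, h2]
      have := hβ (s * L) (t * L) (by positivity) (by nlinarith) (by nlinarith)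
      have h3 : (w * β (s * L))⁻¹ * (w * β (t * L)) = (β (s * L))⁻¹ * β (t * L) := by group
      rw [hsα, htα, h3]
      linarith
  have exact_le : ∀ s t, 0 ≤ s → s ≤ t → t ≤ 1 → FRnorm μ ((α s)⁻¹ * α t) = (t - s) * L := by
    intro s t hs hst ht
    refine le_antisymm (upper s t hs hst ht) ?_
    have h1 := upper 0 s le_rfl hs (hst.trans ht)
    have h2 := upper t 1 (hs.trans hst) ht le_rfl
    have h3 := norm_mul_le hμ ((α 0)⁻¹ * α s) ((α s)⁻¹ * α t)
    have h4 := norm_mul_le hμ ((α 0)⁻¹ * α t) ((α t)⁻¹ * α 1)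
    rw [show (α 0)⁻¹ * α s * ((α s)⁻¹ * α t) = (α 0)⁻¹ * α t by group] at h3
    rw [show (α 0)⁻¹ * α t * ((α t)⁻¹ * α 1) = w⁻¹ * w' by rw [hα0, hα1]; group, ← hL] at h4
    linarith
  refine ⟨α, hα0, hα1, fun s hs t ht => ?_⟩
  rw [← hL]
  rcases le_total s t with h | h
  · rw [exact_le s t hs.1 h ht.2, abs_of_nonneg (sub_nonneg.2 h)]
  · rw [← norm_inv hμ, mul_inv_rev, inv_inv, exact_le t s ht.1 h hs.2, abs_sub_comm,
      abs_of_nonneg (sub_nonneg.2 h)]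
end

section
/- Let G be a group equipped with a conjugation-invariant pseudonorm and let π : G → H be a metric quotient. If G (with the pseudometric induced by its pseudonorm) is a length space, then H is a length space. -/
/-!
A metric quotient `π` is 1-Lipschitz, so it does not increase the length of paths. Given `x y : H`,
a lift `a` of `x` and an almost norm-minimizing lift `k` of `x⁻¹ * y` yield points `a` and `a * k`
of `G` over `x` and `y` whose distance is at most `dist x y + ε / 2`. The image under `π` of an
almost shortest path from `a` to `a * k` is then short enough.
-/

/-- Let `G` be a group with a conjugation-invariant pseudonorm and let
`π : G → H` be a metric quotient.  If `G` (with the induced pseudometric) is a length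
space then so is `H`.  (A path's length is its total variation
`eVariationOn γ (Icc 0 1)`.) -/
theorem metricQuotient_length_space
    {G H : Type*} [Group G] [Group H]
    [PseudoMetricSpace G] [PseudoMetricSpace H]
    (νG : G → ℝ) (νH : H → ℝ)
    -- `νG` is a conjugation-invariant pseudonorm on `G`:
    (hG_one : νG 1 = 0) (hG_nonneg : ∀ g, 0 ≤ νG g) (hG_symm : ∀ g, νG g⁻¹ = νG g)
    (hG_triangle : ∀ g g', νG (g * g') ≤ νG g + νG g')
    (hG_conj : ∀ g k, νG (k * g * k⁻¹) = νG g)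
    -- `νH` is a conjugation-invariant pseudonorm on `H`:
    (hH_one : νH 1 = 0) (hH_nonneg : ∀ h, 0 ≤ νH h) (hH_symm : ∀ h, νH h⁻¹ = νH h)
    (hH_triangle : ∀ h h', νH (h * h') ≤ νH h + νH h')
    (hH_conj : ∀ h k, νH (k * h * k⁻¹) = νH h)
    -- the pseudometrics are the ones induced by the pseudonorms:
    (hdistG : ∀ g g' : G, dist g g' = νG (g⁻¹ * g'))
    (hdistH : ∀ h h' : H, dist h h' = νH (h⁻¹ * h'))
    -- `π` is a metric quotient:
    (π : G →* H) (hsurj : Function.Surjective π)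
    (hquot : ∀ h : H, νH h = sInf { x : ℝ | ∃ g : G, π g = h ∧ νG g = x })
    -- `G` is a length space:
    (hG : ∀ x y : G, ∀ ε > (0:ℝ),
      ∃ γ : ℝ → G, ContinuousOn γ (Set.Icc 0 1) ∧
        γ 0 = x ∧ γ 1 = y ∧
        eVariationOn γ (Set.Icc 0 1) < ENNReal.ofReal (dist x y + ε)) :
    -- then `H` is a length space:
    ∀ x y : H, ∀ ε > (0:ℝ),
      ∃ γ : ℝ → H, ContinuousOn γ (Set.Icc 0 1) ∧
        γ 0 = x ∧ γ 1 = y ∧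
        eVariationOn γ (Set.Icc 0 1) < ENNReal.ofReal (dist x y + ε) := by
  intro x y ε hε
  have hle : ∀ g, νH (π g) ≤ νG g := fun g => by
    rw [hquot]
    exact csInf_le ⟨0, by rintro _ ⟨k, -, rfl⟩; exact hG_nonneg k⟩ ⟨g, rfl, rfl⟩
  have hLip : LipschitzWith 1 π := LipschitzWith.of_dist_le_mul fun a b => by
    rw [hdistG, hdistH, NNReal.coe_one, one_mul, ← map_inv, ← map_mul]
    exact hle _
  obtain ⟨a, rfl⟩ := hsurj x
  obtain ⟨k, hk, hkν⟩ : ∃ k, π k = (π a)⁻¹ * y ∧ νG k < νH ((π a)⁻¹ * y) + ε / 2 := by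
    obtain ⟨k₀, hk₀⟩ := hsurj ((π a)⁻¹ * y)
    have hlt : sInf { r : ℝ | ∃ g : G, π g = (π a)⁻¹ * y ∧ νG g = r }
        < νH ((π a)⁻¹ * y) + ε / 2 := by
      rw [← hquot]; linarith
    obtain ⟨_, ⟨k, hk, rfl⟩, hlt'⟩ := exists_lt_of_csInf_lt (by exact ⟨_, k₀, hk₀, rfl⟩) hlt
    exact ⟨k, hk, hlt'⟩
  obtain ⟨γ, hγ, h0, h1, hlen⟩ := hG a (a * k) (ε / 2) (half_pos hε)
  refine ⟨π ∘ γ, hLip.continuous.comp_continuousOn hγ, by simp [h0], by simp [h1, hk], ?_⟩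
  have hvar : eVariationOn (π ∘ γ) (Set.Icc 0 1) ≤ eVariationOn γ (Set.Icc 0 1) := by
    simpa using (hLip.lipschitzOnWith (s := Set.univ)).comp_eVariationOn_le
      (Set.mapsTo_univ γ (Set.Icc 0 1))
  refine (hvar.trans_lt hlen).trans_le (ENNReal.ofReal_le_ofReal ?_)
  rw [hdistG, hdistH, inv_mul_cancel_left]
  linarith
end

section
/- Let F(A) be a free group and let θ₁, θ₂ ∈ F(A) be cyclically reduced pure elements. If θ₁^{n₁} = θ₂^{n₂} for some nonzero integers n₁, n₂, then θ₁ = θ₂ or θ₁ = θ₂⁻¹. -/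
/-!
Free groups are torsion-free in the strong sense that `x ↦ x ^ n` is injective for `n ≠ 0`.
Since `θ₁ ^ n₁ = θ₂ ^ n₂` commutes with `θ₂`, the elements `θ₁` and `θ₂ θ₁ θ₂⁻¹` have the same
`n₁`-th power, so `θ₁` and `θ₂` commute. The subgroup they generate is commutative, and free by the
Nielsen–Schreier theorem, hence cyclic (`isCyclic_of_isFreeGroup_of_comm`). Thus `θ₁` and `θ₂` are
powers of a common element `h`, and purity forces `h = θ₁ ^ (±1)` and `h = θ₂ ^ (±1)`.
-/

/-- An element `g` of a group is *pure* if it has no proper root: whenever `g = hⁿ`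
for some `h` and some integer `n`, one has `h = g^{±1}` and `n = ±1`. -/
def IsPure {Γ : Type*} [Group Γ] (g : Γ) : Prop :=
  ∀ (h : Γ) (n : ℤ), g = h ^ n → (h = g ∨ h = g⁻¹) ∧ (n = 1 ∨ n = -1)

/-- An element of a free group is *cyclically reduced* if the first letter of its
reduced word is not the inverse of the last letter. -/
def CyclicallyReduced {α : Type*} [DecidableEq α] (w : FreeGroup α) : Prop :=
  ∀ x y : α × Bool, w.toWord.head? = some x → w.toWord.getLast? = some y →
    x ≠ (y.1, !y.2)

/-- A commutative free group is cyclic: two distinct free generators would not commute. -/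
theorem isCyclic_of_isFreeGroup_of_comm {G : Type*} [Group G] [IsFreeGroup G]
    (hcomm : ∀ a b : G, a * b = b * a) : IsCyclic G := by
  classical
  let e : FreeGroup (IsFreeGroup.Generators G) ≃* G := IsFreeGroup.mulEquiv G
  have hsub : Subsingleton (IsFreeGroup.Generators G) := by
    refine ⟨fun x y => ?_⟩
    have h : FreeGroup.of x * FreeGroup.of y = FreeGroup.of y * FreeGroup.of x :=
      e.injective (by rw [map_mul, map_mul, hcomm])
    have hw := congrArg FreeGroup.toWord h
    by_contra hxy
    simp [FreeGroup.toWord_mul, FreeGroup.reduce.cons, hxy, Ne.symm hxy] at hw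
  have hcyc : IsCyclic (FreeGroup (IsFreeGroup.Generators G)) := by
    rcases isEmpty_or_nonempty (IsFreeGroup.Generators G) with hempty | ⟨⟨x⟩⟩
    · infer_instance
    · let _ : Unique (IsFreeGroup.Generators G) := uniqueOfSubsingleton x
      infer_instance
  exact isCyclic_of_surjective e e.surjective

/-- if `θ₁, θ₂` are cyclically reduced pure elements of a free group and
`θ₁^{n₁} = θ₂^{n₂}` for nonzero integers `n₁, n₂`, then `θ₁ = θ₂` or `θ₁ = θ₂⁻¹`. -/
theorem cyclicallyReduced_pure_powers
    {α : Type*} [DecidableEq α]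
    (θ₁ θ₂ : FreeGroup α)
    (hcr₁ : CyclicallyReduced θ₁) (hcr₂ : CyclicallyReduced θ₂)
    (hp₁ : IsPure θ₁) (hp₂ : IsPure θ₂)
    (n₁ n₂ : ℤ) (hn₁ : n₁ ≠ 0) (hn₂ : n₂ ≠ 0)
    (heq : θ₁ ^ n₁ = θ₂ ^ n₂) :
    θ₁ = θ₂ ∨ θ₁ = θ₂⁻¹ := by
  have hconj : θ₂ * θ₁ * θ₂⁻¹ = θ₁ := by
    apply zpow_left_injective hn₁
    change (θ₂ * θ₁ * θ₂⁻¹) ^ n₁ = θ₁ ^ n₁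
    rw [conj_zpow, heq, ← zpow_one_add, add_comm, zpow_add_one, mul_inv_cancel_right]
  have hcomm : θ₂ * θ₁ = θ₁ * θ₂ := mul_inv_eq_iff_eq_mul.mp hconj
  let H : Subgroup (FreeGroup α) := Subgroup.closure {θ₁, θ₂}
  have hH : ∀ a b : H, a * b = b * a := by
    have hgen : ∀ x ∈ ({θ₁, θ₂} : Set (FreeGroup α)), ∀ y ∈ ({θ₁, θ₂} : Set (FreeGroup α)),
        x * y = y * x := by
      rintro x (rfl | rfl) y (rfl | rfl) <;> first | rfl | exact hcomm | exact hcomm.symm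
    exact (Subgroup.isMulCommutative_closure hgen).is_comm.comm
  obtain ⟨⟨h, hh⟩, hgen⟩ := (isCyclic_of_isFreeGroup_of_comm hH).exists_generator
  have hpow : ∀ θ ∈ H, ∃ k : ℤ, θ = h ^ k := by
    intro θ hθ
    obtain ⟨k, hk⟩ := Subgroup.mem_zpowers_iff.mp (hgen ⟨θ, hθ⟩)
    exact ⟨k, (congrArg Subtype.val hk).symm⟩
  obtain ⟨a, ha⟩ := hpow θ₁ (Subgroup.subset_closure (by simp))
  obtain ⟨b, hb⟩ := hpow θ₂ (Subgroup.subset_closure (by simp))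
  rcases (hp₁ h a ha).1 with h₁ | h₁ <;> rcases (hp₂ h b hb).1 with h₂ | h₂
  · exact Or.inl (h₁.symm.trans h₂)
  · exact Or.inr (h₁.symm.trans h₂)
  · exact Or.inr (by rw [← h₂, h₁, inv_inv])
  · exact Or.inl (inv_injective (h₁.symm.trans h₂))
end
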